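/- Assume the multiplicity parameters are real with 0 < τ_a² < 1 for all a ∈ R. Let ω ∈ P⁺ be minuscule or quasi-minuscule, let ω∗ := −v₀ω, where v₀ is the longest element of W₀ (ω∗ is again minuscule or quasi-minuscule), and define the discrete Laplacians (L_ω f)(λ) := ∑_{ν∈W₀ω} ( a_{λ,ν} f(λ−ν) + b_{λ,ν}(1−τ₀⁻²) f(λ) ) and similarly L_{ω∗}. Then: (a) a_{λ,ν} δ_λ = a_{λ−ν,−ν} δ_{λ−ν} for every λ ∈ P and ν ∈ W₀ω, where δ_λ := τ_{w_λ}²; and (b) L_ω is a bounded operator on ℓ²(P,δ) and ⟨L_ω f, g⟩_δ = ⟨f, L_{ω∗} g⟩_δ for all f, g ∈ ℓ²(P,δ), where ⟨f,g⟩_δ := ∑_{λ∈P} f(λ)\overline{g(λ)}δ_λ. -/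

import Mathlib

open scoped RealInnerProductSpace BigOperators Classical

noncomputable section

/-- Alternating composition `A ∘ B ∘ A ∘ ⋯` with `m` factors (starting with `A`). -/
def altComp {α : Type*} (A B : α → α) : ℕ → (α → α)
  | 0 => id
  | m + 1 => A ∘ altComp B A m

/-- The sign of a real number, as an integer (with `sgnZ 0 = 0`). -/
def sgnZ (x : ℝ) : ℤ := if 0 < x then 1 else if x < 0 then -1 else 0

/-- The function `v(x) = (1-t²)∫₀ˣ dy/(1-2t cos y+t²)`. -/
def mvfun (t x : ℝ) : ℝ :=
  (1 - t ^ 2) * ∫ y in (0:ℝ)..x, 1 / (1 - 2 * t * Real.cos y + t ^ 2)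

section AffineOps

variable {V : Type*} [NormedAddCommGroup V] [InnerProductSpace ℝ V]

/-- The coroot `α∨ = 2α/⟨α,α⟩`. -/
def coroot (α : V) : V := (2 / ⟪α, α⟫) • α

/-- The affine root `a = α∨ + r c` (encoded as the pair `(α, r)`), as an affine
function on `V`. -/
def aval (c : ℝ) (a : V × ℤ) (x : V) : ℝ := ⟪x, coroot a.1⟫ + a.2 * c

/-- The affine reflection `s_a(x) = x - a(x) α` attached to `a = α∨ + r c`. -/
def sAff (c : ℝ) (a : V × ℤ) (x : V) : V := x - aval c a x • a.1

/-- `w` maps the affine root `a` to the affine root `b`, i.e. `(wa)(x) = a(w⁻¹x) = b(x)`. -/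
def mapsRoot (c : ℝ) (w : Equiv.Perm V) (a b : V × ℤ) : Prop :=
  ∀ x : V, aval c a (w⁻¹ x) = aval c b x

/-- The linear part `w′` of an affine transformation `w`. -/
def linPart (w : Equiv.Perm V) (x : V) : V := w x - w 0

variable {R : Type*} [Field R]

/-- The difference-reflection operator `T̂_a`. -/
def hatT (c : ℝ) (τ : V × ℤ → R) (a : V × ℤ) (f : V → R) (x : V) : R :=
  if 0 < aval c a x then τ a * f (sAff c a x)
  else if aval c a x = 0 then τ a * f x
  else (τ a)⁻¹ * f (sAff c a x) + (τ a - (τ a)⁻¹) * f x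

/-- The discrete integral operator `J_a`. -/
def Jop (c : ℝ) (a : V × ℤ) (f : V → R) (x : V) : R :=
  if 0 < aval c a x then
    - ∑ k ∈ Finset.Icc (1 : ℤ) ⌊aval c a x⌋, f (x - k • a.1)
  else if aval c a x = 0 then 0
  else ∑ k ∈ Finset.Ico (0 : ℤ) (-⌊aval c a x⌋), f (x + k • a.1)

/-- The integral-reflection operator `I_a = τ_a s_a + (τ_a - τ_a⁻¹) J_a`. -/
def Iop (c : ℝ) (τ : V × ℤ → R) (a : V × ℤ) (f : V → R) (x : V) : R :=
  τ a * f (sAff c a x) + (τ a - (τ a)⁻¹) * Jop c a f x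

end AffineOps

/-- An irreducible reduced crystallographic root system spanning `V`, together with a
choice of positive roots, simple roots, and the highest short root. -/
structure RootSystemData (V : Type*) [NormedAddCommGroup V] [InnerProductSpace ℝ V] :
    Type _ where
  n : ℕ
  n_pos : 1 ≤ n
  rank_eq : Module.finrank ℝ V = n
  R0 : Finset V
  ne_zero : ∀ α ∈ R0, α ≠ (0 : V)
  span_top : Submodule.span ℝ (R0 : Set V) = ⊤
  reduced : ∀ α ∈ R0, ∀ t : ℝ, t • α ∈ R0 → t = 1 ∨ t = -1
  crystallographic : ∀ α ∈ R0, ∀ β ∈ R0, ∃ k : ℤ, ⟪β, coroot α⟫ = (k : ℝ)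
  reflect_mem : ∀ α ∈ R0, ∀ β ∈ R0, β - ⟪β, coroot α⟫ • α ∈ R0
  irreducible : ∀ S : Finset V, S ⊆ R0 →
      (∀ a ∈ S, ∀ b ∈ R0, b ∉ S → ⟪a, b⟫ = 0) → S = ∅ ∨ S = R0
  pos : Finset V
  pos_subset : pos ⊆ R0
  pos_or_neg : ∀ α ∈ R0, α ∈ pos ∨ -α ∈ pos
  pos_not_both : ∀ α ∈ pos, -α ∉ pos
  pos_add : ∀ α ∈ pos, ∀ β ∈ pos, α + β ∈ R0 → α + β ∈ pos
  simpleRoot : Fin n → V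
  simpleRoot_mem : ∀ j, simpleRoot j ∈ pos
  pos_natCombo : ∀ α ∈ pos, ∃ k : Fin n → ℕ, α = ∑ j, (k j : ℝ) • simpleRoot j
  hshort : V
  hshort_mem : hshort ∈ pos
  hshort_short : ∀ α ∈ R0, ‖hshort‖ ≤ ‖α‖
  hshort_highest : ∀ α ∈ R0, ‖α‖ = ‖hshort‖ →
      ∃ k : Fin n → ℕ, hshort - α = ∑ j, (k j : ℝ) • simpleRoot j

namespace RootSystemData

variable {V : Type*} [NormedAddCommGroup V] [InnerProductSpace ℝ V]
variable (D : RootSystemData V)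

/-- The weight lattice `P`. -/
def weightLattice : Set V :=
  {x : V | ∀ α ∈ D.R0, ∃ k : ℤ, ⟪x, coroot α⟫ = (k : ℝ)}

/-- The root lattice `Q`. -/
def rootLattice : Set V := (Submodule.span ℤ (D.R0 : Set V) : Set V)

/-- The coweight lattice `P∨`. -/
def coweightLattice : Set V :=
  {x : V | ∀ α ∈ D.R0, ∃ k : ℤ, ⟪x, α⟫ = (k : ℝ)}

/-- The dominant cone. -/
def dominant : Set V := {x : V | ∀ α ∈ D.pos, 0 ≤ ⟪x, coroot α⟫}

/-- `ω` is a minuscule (dominant) weight. -/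
def IsMinuscule (ω : V) : Prop :=
  ω ∈ D.weightLattice ∧ ω ∈ D.dominant ∧ ω ≠ 0 ∧
    ∀ α ∈ D.pos, ⟪ω, coroot α⟫ ≤ 1

/-- `ω` is the quasi-minuscule weight, i.e. the highest short root. -/
def IsQuasiMinuscule (ω : V) : Prop := ω = D.hshort

/-- The saturated set `P_ϑ` containing the (quasi-)minuscule weights. -/
def Ptheta : Set V :=
  {ν : V | ν ∈ D.weightLattice ∧ ∀ α ∈ D.R0, α ≠ ν → |⟪ν, coroot α⟫| ≤ 1}

/-- Half sum of the positive roots. -/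
def rhoHalf : V := (2⁻¹ : ℝ) • ∑ α ∈ D.pos, α

/-- Half sum of the positive coroots. -/
def rhoVee : V := (2⁻¹ : ℝ) • ∑ α ∈ D.pos, coroot α

/-- `(α, r)` encodes an affine root. -/
def IsAffRoot (a : V × ℤ) : Prop := a.1 ∈ D.R0

/-- `(α, r)` encodes a positive affine root. -/
def IsAffPos (a : V × ℤ) : Prop :=
  a.1 ∈ D.R0 ∧ (1 ≤ a.2 ∨ (a.2 = 0 ∧ a.1 ∈ D.pos))

/-- `(α, r)` encodes a negative affine root. -/
def IsAffNeg (a : V × ℤ) : Prop := D.IsAffPos (-a.1, -a.2)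

/-- The simple affine roots `a₀ = -ϑ∨ + c`, `a_j = α_j∨`. -/
def aSimple (j : Fin (D.n + 1)) : V × ℤ :=
  Fin.cons (α := fun _ => V × ℤ) (-D.hshort, (1 : ℤ))
    (fun i => (D.simpleRoot i, (0 : ℤ))) j

/-- The reflections generating the finite Weyl group `W₀`. -/
def W0Gens : Set (Equiv.Perm V) :=
  {e | ∃ α ∈ D.R0, ∀ x, e x = x - ⟪x, coroot α⟫ • α}

/-- The finite Weyl group `W₀`. -/
def W0 : Subgroup (Equiv.Perm V) := Subgroup.closure D.W0Gens

variable (c : ℝ)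

/-- The affine reflections generating the affine Weyl group `W_R`. -/
def AffGens : Set (Equiv.Perm V) :=
  {e | ∃ a : V × ℤ, D.IsAffRoot a ∧ ∀ x, e x = sAff c a x}

/-- The affine Weyl group `W_R`. -/
def WR : Subgroup (Equiv.Perm V) := Subgroup.closure (D.AffGens c)

/-- The translations `t_{cλ}`, `λ ∈ P`. -/
def TransGens : Set (Equiv.Perm V) :=
  {e | ∃ lam ∈ D.weightLattice, ∀ x : V, e x = x + c • lam}

/-- The extended affine Weyl group `W = W₀ ⋉ t(cP)`. -/
def Wext : Subgroup (Equiv.Perm V) :=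
  Subgroup.closure (D.AffGens c ∪ D.TransGens c)

/-- The set `R(w) = R⁺ ∩ w⁻¹(R⁻)`. -/
def RW (w : Equiv.Perm V) : Set (V × ℤ) :=
  {a | D.IsAffPos a ∧ ∃ b : V × ℤ, D.IsAffNeg b ∧ mapsRoot c w a b}

/-- The length `ℓ(w) = #R(w)`. -/
def len (w : Equiv.Perm V) : ℕ := (D.RW c w).ncard

/-- The closed fundamental alcove `A_c`. -/
def alcove : Set V := {x | ∀ a : V × ℤ, D.IsAffPos a → 0 ≤ aval c a x}

/-- `wmin x` is the unique shortest element of the affine Weyl group mapping `x` into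
the fundamental alcove. -/
def IsWmin (wmin : V → Equiv.Perm V) : Prop :=
  ∀ x : V, wmin x ∈ D.WR c ∧ (wmin x) x ∈ D.alcove c ∧
    ∀ w ∈ D.WR c, w x ∈ D.alcove c → D.len c (wmin x) < D.len c w ∨ w = wmin x

/-- One step in the Bruhat order: `w < w s_a` whenever `ℓ(w) < ℓ(w s_a)`. -/
def bruhatStep (w w' : Equiv.Perm V) : Prop :=
  ∃ a : V × ℤ, D.IsAffPos a ∧ ∃ e : Equiv.Perm V,
    (∀ x, e x = sAff c a x) ∧ w' = w * e ∧ D.len c w < D.len c w'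

/-- The Bruhat order on the affine Weyl group. -/
def bruhatLE (w w' : Equiv.Perm V) : Prop :=
  Relation.ReflTransGen (D.bruhatStep c) w w'

/-- The partial order on `V`: `x ≤ y` iff `x₊ = y₊` and `w_x ≤ w_y` (Bruhat). -/
def vle (wmin : V → Equiv.Perm V) (x y : V) : Prop :=
  (wmin x) x = (wmin y) y ∧ D.bruhatLE c (wmin x) (wmin y)

/-- The interval `[x, y]` for the order `vle`. -/
def vInterval (wmin : V → Equiv.Perm V) (x y : V) : Set V :=
  {z : V | D.vle c wmin x z ∧ D.vle c wmin z y}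

/-- The partial order `⪯` on the weight lattice:
`μ ⪯ λ` iff `λ - μ ∈ Q` and `Conv [μ₊, μ] ⊆ Conv [λ₊, λ]`. -/
def pleq (wmin : V → Equiv.Perm V) (μ lam : V) : Prop :=
  lam - μ ∈ D.rootLattice ∧
    convexHull ℝ (D.vInterval c wmin ((wmin μ) μ) μ)
      ⊆ convexHull ℝ (D.vInterval c wmin ((wmin lam) lam) lam)

section Ops

variable {R : Type*} [Field R]

/-- `τ` is a multiplicity function: nonvanishing on affine roots, and invariant
under the (extended affine) Weyl group action on the affine roots. -/
def IsMultiplicity (τ : V × ℤ → R) : Prop :=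
  (∀ a : V × ℤ, D.IsAffRoot a → τ a ≠ 0) ∧
    ∀ w ∈ D.Wext c, ∀ a b : V × ℤ, D.IsAffRoot a → D.IsAffRoot b →
      mapsRoot c w a b → τ a = τ b

/-- `τ_w = ∏_{a ∈ R(w)} τ_a`. -/
def tauw (τ : V × ℤ → R) (w : Equiv.Perm V) : R := ∏ᶠ a ∈ D.RW c w, τ a

/-- `τ₀`, the multiplicity of the affine simple root `a₀`. -/
def tauZero (τ : V × ℤ → R) : R := τ (-D.hshort, (1 : ℤ))

/-- The operator `I_{j₁} ∘ ⋯ ∘ I_{jℓ}` attached to a word in the simple reflections. -/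
def wordOp (τ : V × ℤ → R) (l : List (Fin (D.n + 1))) : (V → R) → V → R :=
  (l.map fun j => Iop c τ (D.aSimple j)).foldr (· ∘ ·) id

/-- `l` is a reduced word for `w`, i.e. `w = s_{j₁} ∘ ⋯ ∘ s_{jℓ}` with `ℓ = ℓ(w)`. -/
def IsReducedWord (w : Equiv.Perm V) (l : List (Fin (D.n + 1))) : Prop :=
  l.length = D.len c w ∧
    ∀ x : V, w x = ((l.map fun j => sAff c (D.aSimple j)).foldr (· ∘ ·) id) x

/-- `e∨_τ(η) = ∏_{α ∈ R₀⁺} τ_{α∨}^{⟨η,α∨⟩}`. -/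
def etau (τ : V × ℤ → R) (η : V) : R :=
  ∏ α ∈ D.pos, τ (α, (0 : ℤ)) ^ ⌊⟪η, coroot α⟫⌋

/-- `h∨_τ = τ₀² e∨_τ(ϑ)`. -/
def hvee (τ : V × ℤ → R) : R := D.tauZero τ ^ 2 * D.etau τ D.hshort

/-- `θ(μ) = #{b ∈ R(w_μ) : b(μ) = -2}`. -/
def theta (wmin : V → Equiv.Perm V) (μ : V) : ℕ :=
  {b : V × ℤ | b ∈ D.RW c (wmin μ) ∧ aval c b μ = -2}.ncard

/-- The coefficient `c_{λ,η} = θ(λ-η) e∨_τ(η) (h∨_τ)^{-sign⟨λ,η∨⟩}`. -/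
def ccoef (τ : V × ℤ → R) (wmin : V → Equiv.Perm V) (lam η : V) : R :=
  (D.theta c wmin (lam - η) : R) * D.etau τ η *
    D.hvee τ ^ (-sgnZ ⟪lam, coroot η⟫)

/-- The coefficient `a_{λ,ν} = τ_{w_{w_λ(λ-ν)}} τ_{w_{w_λ(λ-ν)} w_λ} τ_{w_λ}⁻¹`. -/
def acoef (τ : V × ℤ → R) (wmin : V → Equiv.Perm V) (lam ν : V) : R :=
  D.tauw c τ (wmin ((wmin lam) (lam - ν))) *
    D.tauw c τ (wmin ((wmin lam) (lam - ν)) * wmin lam) *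
    (D.tauw c τ (wmin lam))⁻¹

/-- The coefficient `b_{λ,ν}`. -/
def bcoef (τ : V × ℤ → R) (wmin : V → Equiv.Perm V) (lam ν : V) : R :=
  if (wmin (lam - ν)) (lam - ν) = (wmin lam) lam then
    D.tauw c τ (wmin ((wmin lam) (lam - ν))) ^ 2 *
      (if D.IsAffNeg (ν, ⌊(1 - ⟪lam, coroot ν⟫) / c⌋) then 1 else 0)
  else D.ccoef c τ wmin ((wmin lam) lam) (linPart (wmin lam) ν)

/-- The intertwining operator `(𝒥f)(λ) = τ_{w_λ}⁻¹ (I_{w_λ} f)(λ₊)`, where `Iw` assigns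
to each `w_λ` the composite of integral-reflection operators along a reduced word. -/
def Jcal (τ : V × ℤ → R) (wmin : V → Equiv.Perm V)
    (Iw : Equiv.Perm V → (V → R) → V → R) (f : V → R) (x : V) : R :=
  (D.tauw c τ (wmin x))⁻¹ * Iw (wmin x) f ((wmin x) x)

end Ops

/-- The Yang–Yang type Morse function `𝒱_μ`. -/
def morse (t : V → ℝ) (μ ξ : V) : ℝ :=
  (c / 2) * ⟪ξ, ξ⟫ - 2 * Real.pi * ⟪D.rhoVee + μ, ξ⟫ +
    ∑ α ∈ D.pos, (2 / ⟪α, α⟫) * ∫ x in (0:ℝ)..(⟪ξ, α⟫), mvfun (t α) x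

/-- The critical equation `cξ + ∑_{α>0} v_α(⟨ξ,α⟩) α∨ = 2π(ρ∨+μ)`. -/
def criticalEq (t : V → ℝ) (μ ξ : V) : Prop :=
  c • ξ + ∑ α ∈ D.pos, mvfun (t α) ⟪ξ, α⟫ • coroot α
    = (2 * Real.pi) • (D.rhoVee + μ)

/-- The Hessian bilinear form `H_{η,ζ}(ξ)`. -/
def hessForm (t : V → ℝ) (ξ η ζ : V) : ℝ :=
  c * ⟪η, ζ⟫ + ∑ α ∈ D.R0,
    (1 - t α ^ 2) * ⟪η, α⟫ * ⟪ζ, α⟫ /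
      (⟪α, α⟫ * (1 - 2 * t α * Real.cos ⟪ξ, α⟫ + t α ^ 2))

/-- `κ_± = (2/n) ∑_{α>0} (1-t_α²)/(1 ± |t_α|)²`; here `s = ±1`. -/
def kappaPM (t : V → ℝ) (s : ℝ) : ℝ :=
  (2 / (D.n : ℝ)) * ∑ α ∈ D.pos, (1 - t α ^ 2) / (1 + s * |t α|) ^ 2

end RootSystemData

open RootSystemData in
/-- The orthogonality weight `δ_λ = τ_{w_λ}²`. -/
def deltaW {V : Type*} [NormedAddCommGroup V] [InnerProductSpace ℝ V]
    (D : RootSystemData V) (c : ℝ) (τ : V × ℤ → ℝ) (wmin : V → Equiv.Perm V)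
    (lam : V) : ℝ :=
  D.tauw c τ (wmin lam) ^ 2

open RootSystemData in
/-- Membership in the Hilbert space `ℓ²(P,δ)`. -/
def MemL2 {V : Type*} [NormedAddCommGroup V] [InnerProductSpace ℝ V]
    (D : RootSystemData V) (c : ℝ) (τ : V × ℤ → ℝ) (wmin : V → Equiv.Perm V)
    (f : V → ℂ) : Prop :=
  Summable fun p : D.weightLattice => ‖f p.1‖ ^ 2 * deltaW D c τ wmin p.1

open RootSystemData in
/-- The inner product `⟨f,g⟩_δ` of `ℓ²(P,δ)`. -/
def innerDelta {V : Type*} [NormedAddCommGroup V] [InnerProductSpace ℝ V]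
    (D : RootSystemData V) (c : ℝ) (τ : V × ℤ → ℝ) (wmin : V → Equiv.Perm V)
    (f g : V → ℂ) : ℂ :=
  ∑' p : D.weightLattice, f p.1 * (starRingEnd ℂ) (g p.1) * ((deltaW D c τ wmin p.1 : ℝ) : ℂ)

open RootSystemData in
/-- The squared norm of `ℓ²(P,δ)`. -/
def normSqDelta {V : Type*} [NormedAddCommGroup V] [InnerProductSpace ℝ V]
    (D : RootSystemData V) (c : ℝ) (τ : V × ℤ → ℝ) (wmin : V → Equiv.Perm V)
    (f : V → ℂ) : ℝ :=
  ∑' p : D.weightLattice, ‖f p.1‖ ^ 2 * deltaW D c τ wmin p.1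

open RootSystemData in
/-- The discrete Laplacian `(L_ω f)(λ) = ∑_{ν∈W₀ω} (a_{λ,ν} f(λ-ν) + b_{λ,ν}(1-τ₀⁻²)f(λ))`,
with `W₀ω` presented by the finset `orb`. -/
def Lop {V : Type*} [NormedAddCommGroup V] [InnerProductSpace ℝ V]
    (D : RootSystemData V) (c : ℝ) (τ : V × ℤ → ℝ) (wmin : V → Equiv.Perm V)
    (orb : Finset V) (f : V → ℂ) (lam : V) : ℂ :=
  ∑ ν ∈ orb,
    (((D.acoef c τ wmin lam ν : ℝ) : ℂ) * f (lam - ν)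
      + ((D.bcoef c τ wmin lam ν : ℝ) : ℂ)
          * (1 - (((D.tauZero τ : ℝ) : ℂ))⁻¹ ^ 2) * f lam)


namespace S17

section
variable {V : Type*} [NormedAddCommGroup V] [InnerProductSpace ℝ V]

lemma coroot_neg (α : V) : coroot (-α) = -coroot α := by
  simp [coroot]

lemma inner_coroot_self {α : V} (h : α ≠ 0) : ⟪α, coroot α⟫ = (2:ℝ) := by
  have : ⟪α, α⟫ ≠ (0:ℝ) := inner_self_ne_zero.mpr h
  rw [coroot, inner_smul_right]; field_simp

lemma coroot_inj {α β : V} (h : coroot α = coroot β) (hα : α ≠ 0) (hβ : β ≠ 0) :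
    α = β := by
  have key : ∀ γ : V, γ ≠ 0 → γ = (2 / ⟪coroot γ, coroot γ⟫) • coroot γ := by
    intro γ hγ
    have : ⟪γ, γ⟫ ≠ (0:ℝ) := inner_self_ne_zero.mpr hγ
    simp only [coroot, inner_smul_left, inner_smul_right, smul_smul]
    have h2 : 2 / (((2:ℝ) / ⟪γ, γ⟫) * (2 / ⟪γ, γ⟫ * ⟪γ, γ⟫)) * (2 / ⟪γ, γ⟫) = 1 := by
      field_simp
    simp only [map_div₀, conj_trivial]
    rw [h2, one_smul]
  rw [key α hα, key β hβ, h]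

lemma aval_neg (c : ℝ) (a : V × ℤ) (x : V) : aval c (-a) x = -aval c a x := by
  simp [aval, coroot_neg]; ring

lemma aval_inj {c : ℝ} (hc : c ≠ 0) {a b : V × ℤ} (ha : a.1 ≠ 0) (hb : b.1 ≠ 0)
    (h : ∀ x, aval c a x = aval c b x) : a = b := by
  have h0 := h 0
  simp only [aval, inner_zero_left, zero_add] at h0
  have h2 : a.2 = b.2 := by exact_mod_cast mul_right_cancel₀ hc h0
  have h1 : coroot a.1 = coroot b.1 := by
    apply ext_inner_left ℝ
    intro x
    have := h x
    simp only [aval, h2] at this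
    linarith
  exact Prod.ext (coroot_inj h1 ha hb) h2

variable (D : RootSystemData V)

lemma neg_mem {α : V} (h : α ∈ D.R0) : -α ∈ D.R0 := by
  have := D.reflect_mem α h α h
  rw [inner_coroot_self (D.ne_zero α h)] at this
  convert this using 1
  rw [two_smul]; abel

lemma coroot_refl {α β : V} (hα : α ≠ 0) :
    coroot (β - ⟪β, coroot α⟫ • α) = coroot β - ⟪α, coroot β⟫ • coroot α := by
  have h : ⟪α, α⟫ ≠ (0:ℝ) := inner_self_ne_zero.mpr hα
  have hn : ⟪β - ⟪β, coroot α⟫ • α, β - ⟪β, coroot α⟫ • α⟫ = ⟪β, β⟫ := by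
    simp only [coroot, inner_sub_left, inner_sub_right, inner_smul_left, inner_smul_right,
      conj_trivial, real_inner_comm β α]
    field_simp; ring
  rw [coroot, hn]
  simp only [coroot, inner_smul_right, smul_sub, smul_smul, real_inner_comm β α]
  congr 2
  ring

/-- reflection of affine roots -/
lemma exists_refl (c : ℝ) {a b : V × ℤ} (ha : a.1 ∈ D.R0) (hb : b.1 ∈ D.R0) :
    ∃ d : V × ℤ, d.1 ∈ D.R0 ∧ ∀ x, aval c d x = aval c b (sAff c a x) := by
  obtain ⟨k, hk⟩ := D.crystallographic b.1 hb a.1 ha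
  refine ⟨(b.1 - ⟪b.1, coroot a.1⟫ • a.1, b.2 - a.2 * k), D.reflect_mem _ ha _ hb, ?_⟩
  intro x
  simp only [aval, sAff]
  rw [coroot_refl (D.ne_zero _ ha)]
  simp only [inner_sub_right, inner_sub_left, inner_smul_left, inner_smul_right, hk, conj_trivial]
  push_cast; ring

lemma aval_sAff (c : ℝ) (a b : V × ℤ) (x : V) :
    aval c b (sAff c a x) = aval c b x - aval c a x * ⟪a.1, coroot b.1⟫ := by
  simp only [aval, sAff, inner_sub_left, inner_smul_left, conj_trivial]; ring

lemma sAff_sAff (c : ℝ) {a : V × ℤ} (ha : a.1 ≠ 0) (x : V) :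
    sAff c a (sAff c a x) = x := by
  rw [sAff, aval_sAff, inner_coroot_self ha, sAff, sub_sub, ← add_smul]
  ring_nf; simp

/-- the affine reflection as a permutation -/
def sPerm (c : ℝ) (a : V × ℤ) (ha : a.1 ≠ 0) : Equiv.Perm V :=
  ⟨sAff c a, sAff c a, sAff_sAff c ha, sAff_sAff c ha⟩

lemma exists_act (c : ℝ) {w : Equiv.Perm V} (hw : w ∈ D.WR c) :
    (∀ a : V × ℤ, a.1 ∈ D.R0 → ∃ b : V × ℤ, b.1 ∈ D.R0 ∧ ∀ x, aval c b x = aval c a (w⁻¹ x)) ∧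
    (∀ a : V × ℤ, a.1 ∈ D.R0 → ∃ b : V × ℤ, b.1 ∈ D.R0 ∧ ∀ x, aval c b x = aval c a (w x)) := by
  unfold RootSystemData.WR at hw
  induction hw using Subgroup.closure_induction with
  | mem e he =>
    obtain ⟨a, ha, he⟩ := he
    have he' : ∀ x, e⁻¹ x = sAff c a x := by
      intro x
      rw [Equiv.Perm.inv_eq_iff_eq, he, sAff_sAff c (D.ne_zero _ ha)]
    constructor
    · intro b hb; simpa only [he'] using exists_refl D c ha hb
    · intro b hb; simpa only [he] using exists_refl D c ha hb
  | one => exact ⟨fun a ha => ⟨a, ha, by simp⟩, fun a ha => ⟨a, ha, by simp⟩⟩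
  | mul u v _ _ hu hv =>
    constructor
    · intro a ha
      obtain ⟨b, hb, h⟩ := hv.1 a ha
      obtain ⟨d, hd, h'⟩ := hu.1 b hb
      exact ⟨d, hd, fun x => by rw [h', h]; simp⟩
    · intro a ha
      obtain ⟨b, hb, h⟩ := hu.2 a ha
      obtain ⟨d, hd, h'⟩ := hv.2 b hb
      exact ⟨d, hd, fun x => by rw [h', h]; simp⟩
  | inv u _ hu => exact ⟨fun a ha => by simpa using hu.2 a ha, hu.1⟩

lemma exists_p (c : ℝ) (hc : 0 < c) : ∃ p : V, (∀ α ∈ D.pos, 0 < ⟪p, coroot α⟫) ∧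
    ∀ α ∈ D.R0, |⟪p, coroot α⟫| < c := by
  have hfp : 0 < Module.finrank ℝ V := by rw [D.rank_eq]; exact D.n_pos
  have : FiniteDimensional ℝ V := Module.finite_of_finrank_pos hfp
  have : CompleteSpace V := FiniteDimensional.complete ℝ V
  have hpos : ∀ α ∈ D.pos, α ∈ Submodule.span ℝ (Set.range D.simpleRoot) := by
    intro α hα
    obtain ⟨k, hk⟩ := D.pos_natCombo α hα
    rw [hk]
    exact Submodule.sum_mem _ fun j _ => Submodule.smul_mem _ _ (Submodule.subset_span ⟨j, rfl⟩)
  have hspan : ⊤ ≤ Submodule.span ℝ (Set.range D.simpleRoot) := by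
    rw [← D.span_top]
    apply Submodule.span_le.mpr
    intro α hα
    rcases D.pos_or_neg α hα with h | h
    · exact hpos _ h
    · have := hpos _ h
      simpa using this
  let B := basisOfTopLeSpanOfCardEqFinrank D.simpleRoot hspan (by simp [D.rank_eq])
  let φ : V →ₗ[ℝ] ℝ := B.constr ℝ (fun _ => (1:ℝ))
  have hφ : ∀ j, φ (D.simpleRoot j) = 1 := by
    intro j
    have : D.simpleRoot j = B j := by simp [B]
    rw [this]; simp [φ]
  let p0 : V := (InnerProductSpace.toDual ℝ V).symm φ.toContinuousLinearMap
  have hp0 : ∀ x, ⟪p0, x⟫ = φ x := by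
    intro x
    simp [p0, InnerProductSpace.toDual_symm_apply]
  have h1 : ∀ α ∈ D.pos, 0 < ⟪p0, coroot α⟫ := by
    intro α hα
    have hne := D.ne_zero α (D.pos_subset hα)
    obtain ⟨k, hk⟩ := D.pos_natCombo α hα
    have hv : ⟪p0, α⟫ = ∑ j, (k j : ℝ) := by
      rw [hp0, hk, map_sum]; simp [hφ]
    have : 0 < ⟪p0, α⟫ := by
      rw [hv]
      refine lt_of_le_of_ne (by positivity) ?_
      intro h0
      have hz := (Finset.sum_eq_zero_iff_of_nonneg (fun j _ => by positivity)).mp h0.symm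
      apply hne
      rw [hk]
      exact Finset.sum_eq_zero fun j hj => by rw [hz j hj, zero_smul]
    rw [coroot, inner_smul_right]
    have : 0 < ⟪α, α⟫ := real_inner_self_pos.mpr hne
    positivity
  let M : ℝ := ∑ α ∈ D.R0, |⟪p0, coroot α⟫| + 1
  have hM : 0 < M := by positivity
  refine ⟨(c / M) • p0, ?_, ?_⟩
  · intro α hα
    have := h1 α hα
    rw [inner_smul_left]
    simp only [conj_trivial]
    positivity
  · intro α hα
    rw [inner_smul_left]
    simp only [conj_trivial]
    rw [abs_mul, abs_of_pos (by positivity : 0 < c / M), div_mul_eq_mul_div, div_lt_iff₀ hM]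
    apply mul_lt_mul_of_pos_left _ hc
    have := Finset.single_le_sum (f := fun α => |⟪p0, coroot α⟫|) (fun i _ => abs_nonneg _) hα
    simp only [M]; linarith

/-- `p` is a point in the interior of the fundamental alcove. -/
def IsP (c : ℝ) (p : V) : Prop := ∀ a : V × ℤ, a.1 ∈ D.R0 →
  (aval c a p ≠ 0 ∧ (D.IsAffPos a ↔ 0 < aval c a p))

lemma exists_isP (c : ℝ) (hc : 0 < c) : ∃ p : V, IsP D c p := by
  obtain ⟨p, h1, h2⟩ := exists_p D c hc
  refine ⟨p, fun a ha => ?_⟩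
  have hb := abs_lt.mp (h2 _ ha)
  unfold RootSystemData.IsAffPos aval
  rcases lt_trichotomy a.2 0 with h | h | h
  · have : (a.2:ℝ) ≤ -1 := by exact_mod_cast (by omega : a.2 ≤ -1)
    have hn : ⟪p, coroot a.1⟫ + a.2 * c < 0 := by nlinarith
    refine ⟨hn.ne, ⟨fun h' => ?_, fun h' => by linarith⟩⟩
    omega
  · simp only [h, Int.cast_zero, zero_mul, add_zero]
    rcases D.pos_or_neg _ ha with h' | h'
    · have := h1 _ h'
      exact ⟨this.ne', ⟨fun _ => this, fun _ => ⟨ha, Or.inr ⟨trivial, h'⟩⟩⟩⟩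
    · have := h1 _ h'
      rw [coroot_neg, inner_neg_right] at this
      refine ⟨by linarith, ⟨fun h3 => ?_, fun _ => by linarith⟩⟩
      rcases h3.2 with h4 | h4
      · omega
      · exact absurd h' (D.pos_not_both _ h4.2)
  · have : (1:ℝ) ≤ a.2 := by exact_mod_cast (by omega : 1 ≤ a.2)
    have hn : 0 < ⟪p, coroot a.1⟫ + a.2 * c := by nlinarith
    exact ⟨hn.ne', ⟨fun _ => hn, fun _ => ⟨ha, Or.inl h⟩⟩⟩

variable {D}
variable {c : ℝ} {p : V}

lemma isAffNeg_iff (hp : IsP D c p) {a : V × ℤ} (ha : a.1 ∈ D.R0) :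
    D.IsAffNeg a ↔ aval c a p < 0 := by
  have := (hp (-a) (neg_mem D ha)).2
  rw [aval_neg] at this
  unfold RootSystemData.IsAffNeg
  rw [show ((-a.1, -a.2) : V × ℤ) = -a from rfl, this]
  constructor <;> intro h <;> linarith

lemma RW_eq (hp : IsP D c p) (hc : c ≠ 0) {w : Equiv.Perm V} (hw : w ∈ D.WR c) :
    D.RW c w = {a | a.1 ∈ D.R0 ∧ 0 < aval c a p ∧ aval c a (w⁻¹ p) < 0} := by
  ext a
  constructor
  · rintro ⟨h1, b, hb, hm⟩
    have ha := h1.1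
    refine ⟨ha, (hp a ha).2.mp h1, ?_⟩
    have hb0 : b.1 ∈ D.R0 := by simpa using neg_mem D hb.1
    rw [hm p]
    exact (isAffNeg_iff hp hb0).mp hb
  · rintro ⟨ha, h1, h2⟩
    obtain ⟨b, hb, h⟩ := (exists_act D c hw).1 a ha
    refine ⟨(hp a ha).2.mpr h1, b, (isAffNeg_iff hp hb).mpr (by rw [h]; exact h2), fun x => (h x).symm⟩

lemma aval_inv_ne (hp : IsP D c p) {w : Equiv.Perm V} (hw : w ∈ D.WR c) {a : V × ℤ}
    (ha : a.1 ∈ D.R0) : aval c a (w⁻¹ p) ≠ 0 := by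
  obtain ⟨b, hb, h⟩ := (exists_act D c hw).1 a ha
  rw [← h]; exact (hp b hb).1

lemma finite_aux (hc : 0 < c) (D : RootSystemData V) (x y : V) :
    {a : V × ℤ | a.1 ∈ D.R0 ∧ 0 < aval c a x ∧ aval c a y < 0}.Finite := by
  let M : ℝ := ∑ α ∈ D.R0, (|⟪x, coroot α⟫| + |⟪y, coroot α⟫|)
  have : {a : V × ℤ | a.1 ∈ D.R0 ∧ 0 < aval c a x ∧ aval c a y < 0} ⊆
      (D.R0 : Set V) ×ˢ (Set.Icc (-⌈M / c⌉) ⌈M / c⌉) := by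
    rintro ⟨α, r⟩ ⟨ha, h1, h2⟩
    have hM := Finset.single_le_sum (f := fun α => |⟪x, coroot α⟫| + |⟪y, coroot α⟫|)
      (fun i _ => by positivity) ha
    simp only [aval] at h1 h2 hM ha
    change _ ≤ M at hM
    have a1 := le_abs_self ⟪x, coroot α⟫
    have a2 := neg_abs_le ⟪y, coroot α⟫
    have a3 := abs_nonneg ⟪x, coroot α⟫
    have a4 := abs_nonneg ⟪y, coroot α⟫
    refine ⟨ha, ?_, ?_⟩
    · have : -(M / c) ≤ r := by
        rw [neg_le, le_div_iff₀ hc] ; linarith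
      have h5 : -(⌈M / c⌉ : ℝ) ≤ r := by linarith [Int.le_ceil (M / c)]
      exact_mod_cast h5
    · have : r ≤ M / c := by
        rw [le_div_iff₀ hc] ; linarith
      have h5 : (r : ℝ) ≤ ⌈M / c⌉ := by linarith [Int.le_ceil (M / c)]
      exact_mod_cast h5
  exact (D.R0.finite_toSet.prod (Set.finite_Icc _ _)).subset this

lemma mem_WR_sPerm {a : V × ℤ} (ha : a.1 ∈ D.R0) :
    sPerm c a (D.ne_zero _ ha) ∈ D.WR c :=
  Subgroup.subset_closure ⟨a, ha, fun _ => rfl⟩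

lemma len_refl_le (hp : IsP D c p) (hc : 0 < c) {w : Equiv.Perm V} (hw : w ∈ D.WR c)
    {a : V × ℤ} (ha : a.1 ∈ D.R0) (h1 : 0 < aval c a p) (h2 : aval c a (w⁻¹ p) < 0) :
    D.len c (w * sPerm c a (D.ne_zero _ ha)) ≤ D.len c w := by
  have hsinv : ∀ x, (w * sPerm c a (D.ne_zero _ ha))⁻¹ x = sAff c a (w⁻¹ x) := by
    intro x; rw [mul_inv_rev]; rfl
  choose! s hs0 hs using fun b (hb : (b : V × ℤ).1 ∈ D.R0) => exists_refl D c ha hb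
  have hss : ∀ b : V × ℤ, b.1 ∈ D.R0 → s (s b) = b := by
    intro b hb
    apply aval_inj hc.ne' (D.ne_zero _ (hs0 _ (hs0 _ hb))) (D.ne_zero _ hb)
    intro x
    rw [hs _ (hs0 _ hb), hs _ hb, sAff_sAff c (D.ne_zero _ ha)]
  unfold RootSystemData.len
  rw [RW_eq hp hc.ne' hw, RW_eq hp hc.ne' (mul_mem hw (mem_WR_sPerm ha)), hsinv]
  refine Set.ncard_le_ncard_of_injOn (fun b => if 0 < aval c (s b) p then s b else b) ?_ ?_
    (finite_aux hc D _ _)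
  · rintro b ⟨hb, h3, h4⟩
    split_ifs with h
    · exact ⟨hs0 _ hb, h, by rw [hs _ hb]; exact h4⟩
    · refine ⟨hb, h3, ?_⟩
      rw [hs _ hb, aval_sAff] at h
      rw [aval_sAff] at h4
      have hk : 0 < ⟪a.1, coroot b.1⟫ := by
        by_contra hk
        push Not at hk
        nlinarith
      nlinarith
  · rintro b ⟨hb, h3, h4⟩ d ⟨hd, h5, h6⟩ h
    dsimp only at h
    split_ifs at h with g1 g2 g2
    · rw [← hss b hb, h, hss d hd]
    · rw [← h, hss b hb] at g2; exact absurd h3 g2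
    · rw [h, hss d hd] at g1; exact absurd h5 g1
    · exact h

variable {wmin : V → Equiv.Perm V}

lemma alcove_nonneg (hp : IsP D c p) {y : V} (hy : y ∈ D.alcove c) {a : V × ℤ}
    (ha : a.1 ∈ D.R0) (h : 0 < aval c a p) : 0 ≤ aval c a y :=
  hy a ((hp a ha).2.mpr h)

lemma sgn_wmin (hp : IsP D c p) (hc : 0 < c) (hw : D.IsWmin c wmin) (x : V) {a : V × ℤ}
    (ha : a.1 ∈ D.R0) :
    0 < aval c a ((wmin x)⁻¹ p) ↔ 0 < aval c a x ∨ (aval c a x = 0 ∧ 0 < aval c a p) := by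
  obtain ⟨hW, hA, hmin⟩ := hw x
  -- sign monotonicity
  have key1 : ∀ b : V × ℤ, b.1 ∈ D.R0 → 0 < aval c b ((wmin x)⁻¹ p) → 0 ≤ aval c b x := by
    intro b hb h
    obtain ⟨d, hd, hdb⟩ := (exists_act D c hW).1 b hb
    rw [← hdb] at h
    have := alcove_nonneg hp hA hd h
    rw [hdb] at this
    simpa using this
  have key2 : ∀ b : V × ℤ, b.1 ∈ D.R0 → aval c b x = 0 → 0 < aval c b p →
      0 < aval c b ((wmin x)⁻¹ p) := by
    intro b hb h0 h1
    rcases lt_or_gt_of_ne (aval_inv_ne hp hW hb) with h | h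
    · exfalso
      have hfix : (wmin x * sPerm c b (D.ne_zero _ hb)) x = wmin x x := by
        change wmin x (sAff c b x) = _
        rw [sAff, h0, zero_smul, sub_zero]
      rcases hmin _ (mul_mem hW (mem_WR_sPerm hb)) (by rw [hfix]; exact hA) with h3 | h3
      · exact absurd (len_refl_le hp hc hW hb h1 h) (not_le.mpr h3)
      · have h4 : sPerm c b (D.ne_zero _ hb) = 1 := by simpa using h3
        have h5 : sAff c b p = p := congrArg (fun e : Equiv.Perm V => e p) h4
        rw [sAff, sub_eq_self, smul_eq_zero] at h5
        rcases h5 with h5 | h5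
        · linarith
        · exact D.ne_zero _ hb h5
    · exact h
  have hn := neg_mem D ha
  constructor
  · intro h
    rcases (key1 a ha h).lt_or_eq with h1 | h1
    · exact Or.inl h1
    · refine Or.inr ⟨h1.symm, ?_⟩
      by_contra h2
      have := key2 (-a) hn (by rw [aval_neg, ← h1, neg_zero])
        (by rw [aval_neg]; rcases lt_or_gt_of_ne (hp a ha).1 with h | h <;> linarith)
      rw [aval_neg] at this
      linarith
  · rintro (h | ⟨h, h'⟩)
    · by_contra h1
      have := key1 (-a) hn
        (by rw [aval_neg]; rcases lt_or_gt_of_ne (aval_inv_ne hp hW ha) with h | h <;> linarith)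
      rw [aval_neg] at this
      linarith
    · exact key2 a ha h h'


/-- positive affine roots that are negative at `x` -/
def NN (D : RootSystemData V) (c : ℝ) (p x : V) : Set (V × ℤ) :=
  {a | a.1 ∈ D.R0 ∧ 0 < aval c a p ∧ aval c a x < 0}

lemma RW_wmin (hp : IsP D c p) (hc : 0 < c) (hw : D.IsWmin c wmin) (x : V) :
    D.RW c (wmin x) = NN D c p x := by
  rw [RW_eq hp hc.ne' (hw x).1]
  ext a
  simp only [NN, Set.mem_ofPred_eq]
  refine and_congr_right fun ha => and_congr_right fun h => ?_
  have h1 := sgn_wmin hp hc hw x ha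
  have h2 := aval_inv_ne hp (hw x).1 ha
  constructor
  · intro h3
    by_contra h4
    rcases (not_lt.mp h4).lt_or_eq with h5 | h5
    · linarith [h1.mpr (Or.inl h5)]
    · linarith [h1.mpr (Or.inr ⟨h5.symm, h⟩)]
  · intro h3
    rcases lt_or_gt_of_ne h2 with h4 | h4
    · exact h4
    · rcases h1.mp h4 with h5 | h5 <;> linarith

/-- `NN` as a finset -/
def NF (D : RootSystemData V) (c : ℝ) (hc : 0 < c) (p x : V) : Finset (V × ℤ) :=
  (finite_aux hc D p x).toFinset

lemma mem_NF (hc : 0 < c) {x : V} {a : V × ℤ} :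
    a ∈ NF D c hc p x ↔ a.1 ∈ D.R0 ∧ 0 < aval c a p ∧ aval c a x < 0 := by
  simp [NF]

variable {τ : V × ℤ → ℝ}

lemma tauw_wmin (hp : IsP D c p) (hc : 0 < c) (hw : D.IsWmin c wmin) (x : V) :
    D.tauw c τ (wmin x) = ∏ a ∈ NF D c hc p x, τ a := by
  rw [RootSystemData.tauw, RW_wmin hp hc hw]
  exact finprod_mem_eq_finite_toFinset_prod _ (finite_aux hc D p x)

/-- invariance of the multiplicity function -/
def TInv (D : RootSystemData V) (c : ℝ) (τ : V × ℤ → ℝ) : Prop :=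
  ∀ w ∈ D.Wext c, ∀ a b : V × ℤ, D.IsAffRoot a → D.IsAffRoot b →
      mapsRoot c w a b → τ a = τ b

lemma WR_le_Wext : D.WR c ≤ D.Wext c := Subgroup.closure_mono Set.subset_union_left

lemma tau_neg (hτ : TInv D c τ) {a : V × ℤ} (ha : a.1 ∈ D.R0) : τ (-a) = τ a := by
  symm
  refine hτ _ (WR_le_Wext (mem_WR_sPerm ha)) a (-a) ha (neg_mem D ha) ?_
  intro x
  change aval c a (sAff c a x) = _
  rw [aval_sAff, inner_coroot_self (D.ne_zero _ ha), aval_neg]; ring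

lemma tauw_mul (hp : IsP D c p) (hc : 0 < c) (hw : D.IsWmin c wmin) (hτ : TInv D c τ)
    (x y : V) :
    D.tauw c τ (wmin (wmin x y)) * D.tauw c τ (wmin (wmin x y) * wmin x) =
      (∏ a ∈ NF D c hc p y \ NF D c hc p x, τ a ^ 2) * D.tauw c τ (wmin x) := by
  have hX := (hw x).1
  have hU := (hw (wmin x y)).1
  set w := wmin x with hwdef
  set u := wmin (w y) with hudef
  set A := NF D c hc p y \ NF D c hc p x with hA
  set B := (NF D c hc p x).filter (fun a => 0 < aval c a y) with hB
  set C := (NF D c hc p x).filter (fun a => ¬ 0 < aval c a y) with hC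
  have hx : D.tauw c τ w = (∏ a ∈ B, τ a) * ∏ a ∈ C, τ a := by
    rw [hwdef, tauw_wmin hp hc hw, Finset.prod_filter_mul_prod_filter_not]
  have hdisjAC : Disjoint A C :=
    Finset.disjoint_of_subset_right (Finset.filter_subset _ _) Finset.sdiff_disjoint
  have hdisjAB : Disjoint A B :=
    Finset.disjoint_of_subset_right (Finset.filter_subset _ _) Finset.sdiff_disjoint
  have huw : D.tauw c τ (u * w) = (∏ a ∈ A, τ a) * ∏ a ∈ C, τ a := by
    rw [← Finset.prod_union hdisjAC, ← finprod_mem_coe_finset, RootSystemData.tauw]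
    congr 1
    have : D.RW c (u * w) = ((A ∪ C : Finset (V × ℤ)) : Set (V × ℤ)) := by
      rw [RW_eq hp hc.ne' (mul_mem hU hX)]
      ext b
      simp only [Set.mem_ofPred_eq, Finset.coe_union, Set.mem_union, Finset.mem_coe, hA, hC,
        Finset.mem_sdiff, Finset.mem_filter, mem_NF]
      by_cases hb : b.1 ∈ D.R0
      swap
      · simp [hb]
      by_cases hbp : 0 < aval c b p
      swap
      · simp [hbp]
      simp only [hb, hbp, true_and]
      obtain ⟨a, ha, hab⟩ := (exists_act D c hX).1 b hb
      have e1 : aval c b ((u * w)⁻¹ p) = aval c a (u⁻¹ p) := by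
        rw [hab]; simp
      have e2 : aval c a (w y) = aval c b y := by rw [hab]; simp
      have s1 := sgn_wmin hp hc hw (w y) ha
      have s2 := sgn_wmin hp hc hw x hb
      have n1 := aval_inv_ne hp hU ha
      rw [← hudef, e2, hab p, s2] at s1
      rw [e1]
      have n2 : aval c a (u⁻¹ p) < 0 ↔ ¬ 0 < aval c a (u⁻¹ p) :=
        ⟨fun h => not_lt.mpr h.le, fun h => lt_of_le_of_ne (not_lt.mp h) n1⟩
      rw [n2, s1]
      generalize aval c b y = s at *
      generalize aval c b x = t at *
      clear s1 n2 s2 e1 e2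
      rcases lt_trichotomy s 0 with h1 | h1 | h1 <;>
      rcases lt_trichotomy t 0 with h2 | h2 | h2 <;>
      grind
    rw [this]
  have hu : D.tauw c τ u = (∏ a ∈ A, τ a) * ∏ a ∈ B, τ a := by
    choose! s hs0 hs using (exists_act D c hX).1
    have hsinj : ∀ a b : V × ℤ, a.1 ∈ D.R0 → b.1 ∈ D.R0 → s a = s b → a = b := by
      intro a b ha hb h
      apply aval_inj hc.ne' (D.ne_zero _ ha) (D.ne_zero _ hb)
      intro z
      have h1 := hs a ha (w z)
      rw [h, hs b hb] at h1
      simpa using h1.symm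
    have hst : ∀ a : V × ℤ, a.1 ∈ D.R0 → τ (s a) = τ a := by
      intro a ha
      exact (hτ w (WR_le_Wext hX) a (s a) ha (hs0 a ha) fun z => (hs a ha z).symm).symm
    have hsn : ∀ a : V × ℤ, a.1 ∈ D.R0 → s (-a) = - s a := by
      intro a ha
      apply aval_inj hc.ne' (D.ne_zero _ (hs0 _ (neg_mem D ha)))
        (D.ne_zero _ (neg_mem D (hs0 _ ha)))
      intro z
      rw [hs _ (neg_mem D ha), aval_neg, aval_neg, hs _ ha]
    have hR : D.tauw c τ u = ∏ a ∈ NF D c hc p (w y), τ a := tauw_wmin hp hc hw (w y)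
    rw [← Finset.prod_union hdisjAB, hR]
    symm
    have key : ∀ b : V × ℤ, b.1 ∈ D.R0 →
        (0 < aval c (s b) p ↔ 0 < aval c b x ∨ (aval c b x = 0 ∧ 0 < aval c b p)) := by
      intro b hb
      rw [hs b hb]; exact sgn_wmin hp hc hw x hb
    have keyy : ∀ b : V × ℤ, b.1 ∈ D.R0 → aval c (s b) (w y) = aval c b y := by
      intro b hb; rw [hs b hb]; simp
    have memA : ∀ b, b ∈ A ↔ b.1 ∈ D.R0 ∧ 0 < aval c b p ∧ aval c b y < 0 ∧ 0 ≤ aval c b x := by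
      intro b
      simp only [hA, Finset.mem_sdiff, mem_NF]
      constructor
      · rintro ⟨⟨h1, h2, h3⟩, h4⟩
        exact ⟨h1, h2, h3, by by_contra h; exact h4 ⟨h1, h2, not_le.mp h⟩⟩
      · rintro ⟨h1, h2, h3, h4⟩
        exact ⟨⟨h1, h2, h3⟩, fun h => by linarith [h.2.2]⟩
    have memB : ∀ b, b ∈ B ↔ b.1 ∈ D.R0 ∧ 0 < aval c b p ∧ 0 < aval c b y ∧ aval c b x < 0 := by
      intro b
      simp only [hB, Finset.mem_filter, mem_NF]; tauto
    refine Finset.prod_bij (fun b _ => if aval c b y < 0 then s b else - s b) ?_ ?_ ?_ ?_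
    · intro b hb
      rw [mem_NF]
      rcases Finset.mem_union.mp hb with hb | hb
      · obtain ⟨h1, h2, h3, h4⟩ := (memA b).mp hb
        rw [if_pos h3, keyy b h1, key b h1]
        refine ⟨hs0 b h1, ?_, h3⟩
        rcases h4.lt_or_eq with h | h
        · exact Or.inl h
        · exact Or.inr ⟨h.symm, h2⟩
      · obtain ⟨h1, h2, h3, h4⟩ := (memB b).mp hb
        rw [if_neg h3.not_gt, ← hsn b h1, keyy _ (neg_mem D h1), key _ (neg_mem D h1)]
        simp only [aval_neg]
        exact ⟨hs0 _ (neg_mem D h1), Or.inl (by linarith), by linarith⟩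
    · intro b hb d hd h
      have hb0 : b.1 ∈ D.R0 ∧ 0 < aval c b p := by
        rcases Finset.mem_union.mp hb with hb | hb
        · exact ⟨((memA b).mp hb).1, ((memA b).mp hb).2.1⟩
        · exact ⟨((memB b).mp hb).1, ((memB b).mp hb).2.1⟩
      have hd0 : d.1 ∈ D.R0 ∧ 0 < aval c d p := by
        rcases Finset.mem_union.mp hd with hd | hd
        · exact ⟨((memA d).mp hd).1, ((memA d).mp hd).2.1⟩
        · exact ⟨((memB d).mp hd).1, ((memB d).mp hd).2.1⟩
      split_ifs at h with g1 g2 g2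
      · exact hsinj _ _ hb0.1 hd0.1 h
      · rw [← hsn _ hd0.1] at h
        have := hsinj _ _ hb0.1 (neg_mem D hd0.1) h
        have h5 := hb0.2
        rw [this, aval_neg] at h5
        linarith [hd0.2]
      · rw [← hsn _ hb0.1] at h
        have := hsinj _ _ (neg_mem D hb0.1) hd0.1 h
        have h5 := hd0.2
        rw [← this, aval_neg] at h5
        linarith [hb0.2]
      · exact hsinj _ _ hb0.1 hd0.1 (neg_injective h)
    · intro a ha
      obtain ⟨h1, h2, h3⟩ := (mem_NF hc).mp ha
      obtain ⟨b, hb, hab⟩ := (exists_act D c hX).2 a h1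
      have hsb : s b = a := by
        apply aval_inj hc.ne' (D.ne_zero _ (hs0 _ hb)) (D.ne_zero _ h1)
        intro z
        rw [hs b hb, hab]; simp
      have hby : aval c b y < 0 := by rw [hab]; exact h3
      rw [← hsb, key b hb] at h2
      rcases lt_or_gt_of_ne (hp b hb).1 with h | h
      · refine ⟨-b, Finset.mem_union_right _ ((memB _).mpr ⟨neg_mem D hb, ?_⟩), ?_⟩
        · simp only [aval_neg]
          refine ⟨by linarith, by linarith, ?_⟩
          rcases h2 with h2 | h2 <;> linarith
        · rw [if_neg (by rw [aval_neg]; linarith), hsn b hb, neg_neg, hsb]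
      · refine ⟨b, Finset.mem_union_left _ ((memA _).mpr ⟨hb, h, hby, ?_⟩), ?_⟩
        · rcases h2 with h2 | h2 <;> linarith
        · rw [if_pos hby, hsb]
    · intro b hb
      have hb0 : b.1 ∈ D.R0 := by
        rcases Finset.mem_union.mp hb with hb | hb
        · exact ((memA b).mp hb).1
        · exact ((memB b).mp hb).1
      split_ifs
      · exact (hst b hb0).symm
      · rw [tau_neg hτ (hs0 b hb0), hst b hb0]
  rw [hu, huw, hx, Finset.prod_pow]
  ring

/-- the bounds on `τ` -/
def TBd (D : RootSystemData V) (τ : V × ℤ → ℝ) : Prop :=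
  ∀ a : V × ℤ, D.IsAffRoot a → 0 < τ a ^ 2 ∧ τ a ^ 2 < 1

lemma tauw_wmin_ne (hp : IsP D c p) (hc : 0 < c) (hw : D.IsWmin c wmin) (hb : TBd D τ) (x : V) :
    D.tauw c τ (wmin x) ≠ 0 := by
  rw [tauw_wmin hp hc hw, Finset.prod_ne_zero_iff]
  intro a ha h
  have := (hb a ((mem_NF hc).mp ha).1).1
  rw [h] at this; norm_num at this

lemma acoef_eq (hp : IsP D c p) (hc : 0 < c) (hw : D.IsWmin c wmin) (hτ : TInv D c τ)
    (hb : TBd D τ) (x ν : V) :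
    D.acoef c τ wmin x ν = ∏ a ∈ NF D c hc p (x - ν) \ NF D c hc p x, τ a ^ 2 := by
  rw [RootSystemData.acoef, tauw_mul hp hc hw hτ, mul_assoc,
    mul_inv_cancel₀ (tauw_wmin_ne hp hc hw hb x), mul_one]

lemma deltaW_eq (hp : IsP D c p) (hc : 0 < c) (hw : D.IsWmin c wmin) (x : V) :
    deltaW D c τ wmin x = ∏ a ∈ NF D c hc p x, τ a ^ 2 := by
  rw [deltaW, tauw_wmin hp hc hw, Finset.prod_pow]

lemma acoef_delta (hp : IsP D c p) (hc : 0 < c) (hw : D.IsWmin c wmin) (hτ : TInv D c τ)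
    (hb : TBd D τ) (x ν : V) :
    D.acoef c τ wmin x ν * deltaW D c τ wmin x
      = ∏ a ∈ NF D c hc p (x - ν) ∪ NF D c hc p x, τ a ^ 2 := by
  rw [acoef_eq hp hc hw hτ hb, deltaW_eq hp hc hw, ← Finset.prod_union Finset.sdiff_disjoint,
    Finset.sdiff_union_self_eq_union]

lemma acoef_symm (hp : IsP D c p) (hc : 0 < c) (hw : D.IsWmin c wmin) (hτ : TInv D c τ)
    (hb : TBd D τ) (x ν : V) :
    D.acoef c τ wmin x ν * deltaW D c τ wmin x
      = D.acoef c τ wmin (x - ν) (-ν) * deltaW D c τ wmin (x - ν) := by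
  rw [acoef_delta hp hc hw hτ hb, acoef_delta hp hc hw hτ hb, Finset.union_comm]
  simp

lemma prod_bd (hc : 0 < c) (hb : TBd D τ) (x : V) (S : Finset (V × ℤ))
    (hS : S ⊆ NF D c hc p x) :
    0 < ∏ a ∈ S, τ a ^ 2 ∧ ∏ a ∈ S, τ a ^ 2 ≤ 1 :=
  ⟨Finset.prod_pos fun a ha => (hb a ((mem_NF hc).mp (hS ha)).1).1,
    Finset.prod_le_one (fun _ _ => sq_nonneg _)
      fun a ha => (hb a ((mem_NF hc).mp (hS ha)).1).2.le⟩

lemma acoef_bd (hp : IsP D c p) (hc : 0 < c) (hw : D.IsWmin c wmin) (hτ : TInv D c τ)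
    (hb : TBd D τ) (x ν : V) :
    0 < D.acoef c τ wmin x ν ∧ D.acoef c τ wmin x ν ≤ 1 := by
  rw [acoef_eq hp hc hw hτ hb]
  exact prod_bd hc hb _ _ Finset.sdiff_subset

lemma delta_bd (hp : IsP D c p) (hc : 0 < c) (hw : D.IsWmin c wmin)
    (hb : TBd D τ) (x : V) :
    0 < deltaW D c τ wmin x ∧ deltaW D c τ wmin x ≤ 1 := by
  rw [deltaW_eq hp hc hw]
  exact prod_bd hc hb _ _ subset_rfl

/-- properties of elements of the finite Weyl group -/
lemma W0_lin {v : Equiv.Perm V} (hv : v ∈ D.W0) :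
    ∃ L : V ≃ₗᵢ[ℝ] V, (∀ x, v x = L x) ∧ (∀ α ∈ D.R0, L α ∈ D.R0) ∧
      (∀ α ∈ D.R0, L.symm α ∈ D.R0) := by
  unfold RootSystemData.W0 at hv
  induction hv using Subgroup.closure_induction with
  | mem e he =>
    obtain ⟨α, hα, he⟩ := he
    have hα0 := D.ne_zero α hα
    have hinv : ∀ x, e (e x) = x := by
      intro x
      rw [he (e x), he x, inner_sub_left, inner_smul_left, inner_coroot_self hα0, sub_sub,
        ← add_smul]
      simp only [conj_trivial]
      ring_nf; simp
    let l : V ≃ₗ[ℝ] V :=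
      { toFun := e
        invFun := e
        map_add' := by
          intro x y; simp only [he, inner_add_left, add_smul]; abel
        map_smul' := by
          intro r x
          simp only [he, inner_smul_left, conj_trivial, RingHom.id_apply, smul_sub, smul_smul]
        left_inv := hinv
        right_inv := hinv }
    have hl : ∀ x y : V, ⟪l x, l y⟫ = ⟪x, y⟫ := by
      intro x y
      change ⟪e x, e y⟫ = _
      have h : ⟪α, α⟫ ≠ (0:ℝ) := inner_self_ne_zero.mpr hα0
      simp only [he, coroot, inner_sub_left, inner_sub_right, inner_smul_left, inner_smul_right,
        conj_trivial, real_inner_comm y α]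
      field_simp; ring
    refine ⟨l.isometryOfInner hl, fun x => rfl, ?_, ?_⟩
    · intro β hβ
      change e β ∈ _
      rw [he]; exact D.reflect_mem α hα β hβ
    · intro β hβ
      change e β ∈ _
      rw [he]; exact D.reflect_mem α hα β hβ
  | one => exact ⟨LinearIsometryEquiv.refl ℝ V, fun x => rfl, fun _ h => h, fun _ h => h⟩
  | mul u v _ _ hu hv =>
    obtain ⟨L, h1, h2, h3⟩ := hu
    obtain ⟨M, g1, g2, g3⟩ := hv
    refine ⟨M.trans L, fun x => by simp [h1, g1], fun α h => h2 _ (g2 _ h),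
      fun α h => g3 _ (h3 _ h)⟩
  | inv u _ hu =>
    obtain ⟨L, h1, h2, h3⟩ := hu
    refine ⟨L.symm, fun x => ?_, h3, by simpa using h2⟩
    rw [Equiv.Perm.inv_eq_iff_eq, h1]; simp

lemma coroot_isom (L : V ≃ₗᵢ[ℝ] V) (α : V) : coroot (L α) = L (coroot α) := by
  simp [coroot]

lemma refl_mem_W0 {α : V} (hα : α ∈ D.R0) :
    sPerm 1 (α, (0:ℤ)) (D.ne_zero _ hα) ∈ D.W0 :=
  Subgroup.subset_closure ⟨α, hα, fun x => by
    change sAff 1 (α, 0) x = _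
    simp [sAff, aval]⟩

lemma WR_lin {w : Equiv.Perm V} (hw : w ∈ D.WR c) :
    ∃ v ∈ D.W0, ∀ x, w x = v x + w 0 := by
  unfold RootSystemData.WR at hw
  induction hw using Subgroup.closure_induction with
  | mem e he =>
    obtain ⟨a, ha, he⟩ := he
    refine ⟨_, refl_mem_W0 ha, fun x => ?_⟩
    change _ = sAff 1 (a.1, 0) x + _
    simp only [he, sAff, aval]
    simp only [inner_zero_left, zero_add, zero_sub, Int.cast_zero, zero_mul, add_zero, add_smul]
    abel
  | one => exact ⟨1, one_mem _, fun x => by simp⟩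
  | mul u v _ _ hu hv =>
    obtain ⟨u', h1, h2⟩ := hu
    obtain ⟨v', g1, g2⟩ := hv
    refine ⟨u' * v', mul_mem h1 g1, fun x => ?_⟩
    obtain ⟨L, hL, _⟩ := W0_lin h1
    simp only [Equiv.Perm.mul_apply]
    rw [h2 (v x), g2 x, h2 (v 0), hL, hL, hL, map_add]
    abel
  | inv u _ hu =>
    obtain ⟨u', h1, h2⟩ := hu
    obtain ⟨L, hL, _⟩ := W0_lin h1
    refine ⟨u'⁻¹, inv_mem h1, fun x => ?_⟩
    rw [Equiv.Perm.inv_eq_iff_eq, h2, hL, map_add, ← hL, ← hL (u⁻¹ 0)]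
    have := h2 (u⁻¹ 0)
    rw [← Equiv.Perm.mul_apply, mul_inv_cancel, Equiv.Perm.one_apply] at this ⊢
    rw [add_assoc, ← this, add_zero]

lemma linPart_mem {w : Equiv.Perm V} (hw : w ∈ D.WR c) (x : V) :
    ∃ v ∈ D.W0, linPart w x = v x := by
  obtain ⟨v, hv, h⟩ := WR_lin hw
  exact ⟨v, hv, by rw [linPart, h x]; simp⟩

lemma theta_le (hc : 0 < c) (μ : V) : D.theta c wmin μ ≤ D.R0.card := by
  unfold RootSystemData.theta
  rw [← Set.ncard_coe_finset D.R0]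
  refine Set.ncard_le_ncard_of_injOn Prod.fst ?_ ?_ D.R0.finite_toSet
  · rintro b ⟨⟨hb, _⟩, _⟩
    exact hb.1
  · rintro ⟨β, r⟩ ⟨_, h1⟩ ⟨γ, s⟩ ⟨_, h2⟩ h
    simp only at h
    subst h
    simp only [aval] at h1 h2
    have : (r:ℝ) = s := mul_right_cancel₀ hc.ne' (by linarith)
    exact Prod.ext rfl (by exact_mod_cast this)

lemma bcoef_bd (hp : IsP D c p) (hc : 0 < c) (hw : D.IsWmin c wmin)
    (hb : TBd D τ) {ω : V} {orb : Finset V} (horb : ∀ ν : V, ν ∈ orb ↔ ∃ w ∈ D.W0, w ω = ν) :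
    ∃ B : ℝ, 0 ≤ B ∧ ∀ x, ∀ ν ∈ orb, |D.bcoef c τ wmin x ν| ≤ B := by
  set h := D.hvee τ
  set B1 : ℝ := D.R0.card * (∑ η ∈ orb, |D.etau τ η|) * (1 + |h| + |h⁻¹|)
  have hB1 : 0 ≤ B1 := by positivity
  refine ⟨1 + B1, by positivity, ?_⟩
  intro x ν hν
  unfold RootSystemData.bcoef
  split_ifs with h1 h2
  · have := delta_bd hp hc hw hb (wmin x (x - ν))
    rw [deltaW] at this
    rw [mul_one, abs_of_pos this.1]
    linarith [this.2]
  · simp; linarith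
  · have hη : linPart (wmin x) ν ∈ orb := by
      obtain ⟨v, hv, h3⟩ := linPart_mem (hw x).1 ν
      obtain ⟨v', hv', h4⟩ := (horb ν).mp hν
      exact (horb _).mpr ⟨v * v', mul_mem hv hv', by rw [h3, ← h4]; rfl⟩
    unfold RootSystemData.ccoef
    rw [abs_mul, abs_mul]
    have : |(D.theta c wmin ((wmin x) x - linPart (wmin x) ν) : ℝ)| *
        |D.etau τ (linPart (wmin x) ν)| *
        |D.hvee τ ^ (-sgnZ ⟪(wmin x) x, coroot (linPart (wmin x) ν)⟫)| ≤ B1 := by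
      apply mul_le_mul _ _ (abs_nonneg _) (by positivity)
      · apply mul_le_mul _ _ (abs_nonneg _) (by positivity)
        · rw [abs_of_nonneg (by positivity)]
          exact_mod_cast theta_le hc _
        · exact Finset.single_le_sum (f := fun η => |D.etau τ η|) (fun i _ => abs_nonneg _) hη
      · have a1 := abs_nonneg h
        have a2 := abs_nonneg h⁻¹
        unfold sgnZ
        split_ifs
        · rw [zpow_neg, zpow_one]; change |h⁻¹| ≤ _; linarith
        · rw [neg_neg, zpow_one]; change |h| ≤ _; linarith
        · simp only [neg_zero, zpow_zero, abs_one]; linarith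
    linarith

/-- all pairings bounded by one -/
def Mini (D : RootSystemData V) (ν : V) : Prop := ∀ α ∈ D.R0, |⟪ν, coroot α⟫| ≤ 1

lemma mini_W0 {ν : V} (h : Mini D ν) {v : Equiv.Perm V} (hv : v ∈ D.W0) : Mini D (v ν) := by
  obtain ⟨L, h1, h2, h3⟩ := W0_lin hv
  intro α hα
  have := h _ (h3 α hα)
  rw [coroot_isom, ← L.inner_map_map] at this
  simpa [h1] using this

lemma mini_neg {ν : V} (h : Mini D ν) : Mini D (-ν) := by
  intro α hα
  simpa using h α hα

lemma mini_of_minuscule {ω : V} (h : D.IsMinuscule ω) : Mini D ω := by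
  intro α hα
  rcases D.pos_or_neg α hα with h1 | h1
  · exact abs_le.mpr ⟨by linarith [h.2.1 α h1], h.2.2.2 α h1⟩
  · have a := h.2.1 _ h1
    have b := h.2.2.2 _ h1
    rw [coroot_neg, inner_neg_right] at a b
    exact abs_le.mpr ⟨by linarith, by linarith⟩

lemma bcoef_zero (hw : D.IsWmin c wmin) {ν : V} (h : Mini D ν) (x : V) :
    D.bcoef c τ wmin x ν = 0 := by
  unfold RootSystemData.bcoef
  split_ifs with h1 h2
  · exfalso
    have hν : ν ∈ D.R0 := by simpa using neg_mem D h2.1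
    have := h ν hν
    rw [inner_coroot_self (D.ne_zero _ hν)] at this
    norm_num at this
  · simp
  · unfold RootSystemData.ccoef
    have : D.theta c wmin ((wmin x) x - linPart (wmin x) ν) = 0 := by
      unfold RootSystemData.theta
      convert Set.ncard_empty (V × ℤ)
      ext b
      simp only [Set.mem_ofPred_eq, Set.mem_empty_iff_false, iff_false]
      rintro ⟨⟨hb, _⟩, h3⟩
      obtain ⟨v, hv, h4⟩ := linPart_mem (hw x).1 ν
      have h5 := abs_le.mp (mini_W0 h hv b.1 hb.1)
      have h6 := (hw x).2.1 b hb
      rw [h4] at h3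
      simp only [aval, inner_sub_left] at h3 h6
      linarith [h5.2]
    rw [this]; simp

lemma wl_sub {x y : V} (hx : x ∈ D.weightLattice) (hy : y ∈ D.weightLattice) :
    x - y ∈ D.weightLattice := by
  intro α hα
  obtain ⟨k, hk⟩ := hx α hα
  obtain ⟨l, hl⟩ := hy α hα
  exact ⟨k - l, by rw [inner_sub_left, hk, hl]; push_cast; ring⟩

lemma wl_add {x y : V} (hx : x ∈ D.weightLattice) (hy : y ∈ D.weightLattice) :
    x + y ∈ D.weightLattice := by
  intro α hα
  obtain ⟨k, hk⟩ := hx α hα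
  obtain ⟨l, hl⟩ := hy α hα
  exact ⟨k + l, by rw [inner_add_left, hk, hl]; push_cast; ring⟩

lemma wl_W0 {x : V} (hx : x ∈ D.weightLattice) {v : Equiv.Perm V} (hv : v ∈ D.W0) :
    v x ∈ D.weightLattice := by
  obtain ⟨L, h1, h2, h3⟩ := W0_lin hv
  intro α hα
  obtain ⟨k, hk⟩ := hx _ (h3 α hα)
  rw [coroot_isom, ← L.inner_map_map] at hk
  exact ⟨k, by simpa [h1] using hk⟩

/-- translation of the weight lattice -/
def shift (D : RootSystemData V) (ν : V) (hν : ν ∈ D.weightLattice) :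
    D.weightLattice ≃ D.weightLattice where
  toFun q := ⟨q.1 - ν, wl_sub q.2 hν⟩
  invFun q := ⟨q.1 + ν, wl_add q.2 hν⟩
  left_inv q := by simp
  right_inv q := by simp

/-- diagonal coefficient -/
def diagC (D : RootSystemData V) (c : ℝ) (τ : V × ℤ → ℝ) (wmin : V → Equiv.Perm V)
    (orb : Finset V) (x : V) : ℝ :=
  (∑ ν ∈ orb, D.bcoef c τ wmin x ν) * (1 - (D.tauZero τ)⁻¹ ^ 2)

lemma Lop_eq (orb : Finset V) (f : V → ℂ) (x : V) :
    Lop D c τ wmin orb f x = ∑ ν ∈ orb, ((D.acoef c τ wmin x ν : ℝ) : ℂ) * f (x - ν)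
      + ((diagC D c τ wmin orb x : ℝ) : ℂ) * f x := by
  unfold Lop diagC
  rw [Finset.sum_add_distrib]
  push_cast
  rw [Finset.sum_mul, Finset.sum_mul]

lemma diagC_bd (hp : IsP D c p) (hc : 0 < c) (hw : D.IsWmin c wmin)
    (hb : TBd D τ) {ω : V} {orb : Finset V} (horb : ∀ ν : V, ν ∈ orb ↔ ∃ w ∈ D.W0, w ω = ν) :
    ∃ B : ℝ, 0 ≤ B ∧ ∀ x, |diagC D c τ wmin orb x| ≤ B := by
  obtain ⟨B, hB, h⟩ := bcoef_bd hp hc hw hb horb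
  refine ⟨(orb.card * B) * |1 - (D.tauZero τ)⁻¹ ^ 2|, by positivity, fun x => ?_⟩
  unfold diagC
  rw [abs_mul]
  gcongr
  refine (Finset.abs_sum_le_sum_abs _ _).trans ?_
  refine (Finset.sum_le_sum (fun ν hν => h x ν hν)).trans ?_
  simp

lemma acoef_delta_le (hp : IsP D c p) (hc : 0 < c) (hw : D.IsWmin c wmin) (hτ : TInv D c τ)
    (hb : TBd D τ) (x ν : V) :
    D.acoef c τ wmin x ν * deltaW D c τ wmin x ≤ deltaW D c τ wmin (x - ν) := by
  rw [acoef_symm hp hc hw hτ hb]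
  have h1 := acoef_bd hp hc hw hτ hb (x - ν) (-ν)
  have h2 := delta_bd hp hc hw hb (x - ν)
  nlinarith

lemma Lop_pt (hp : IsP D c p) (hc : 0 < c) (hw : D.IsWmin c wmin) (hτ : TInv D c τ)
    (hb : TBd D τ) {orb : Finset V} {B : ℝ} 
    (hB : ∀ x, |diagC D c τ wmin orb x| ≤ B) (f : V → ℂ) (x : V) :
    ‖Lop D c τ wmin orb f x‖ ^ 2 * deltaW D c τ wmin x ≤
      2 * (orb.card * ∑ ν ∈ orb, ‖f (x - ν)‖ ^ 2 * deltaW D c τ wmin (x - ν)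
        + B ^ 2 * (‖f x‖ ^ 2 * deltaW D c τ wmin x)) := by
  have hd := delta_bd hp hc hw hb x
  set d := deltaW D c τ wmin x with hdd
  set S : ℝ := ∑ ν ∈ orb, D.acoef c τ wmin x ν * ‖f (x - ν)‖ with hS
  have h1 : ‖Lop D c τ wmin orb f x‖ ≤ S + B * ‖f x‖ := by
    rw [Lop_eq]
    refine (norm_add_le _ _).trans (add_le_add ?_ ?_)
    · refine (norm_sum_le _ _).trans (Finset.sum_le_sum fun ν _ => ?_)
      rw [norm_mul, Complex.norm_real, Real.norm_of_nonneg (acoef_bd hp hc hw hτ hb x ν).1.le]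
    · rw [norm_mul, Complex.norm_real]
      exact mul_le_mul_of_nonneg_right (hB x) (norm_nonneg _)
  have h2 : ‖Lop D c τ wmin orb f x‖ ^ 2 ≤ 2 * (S ^ 2 + (B * ‖f x‖) ^ 2) := by
    have := pow_le_pow_left₀ (norm_nonneg _) h1 2
    nlinarith [sq_nonneg (S - B * ‖f x‖)]
  have h3 : S ^ 2 * d ≤ orb.card * ∑ ν ∈ orb, ‖f (x - ν)‖ ^ 2 * deltaW D c τ wmin (x - ν) := by
    have := sq_sum_le_card_mul_sum_sq (s := orb)
      (f := fun ν => D.acoef c τ wmin x ν * ‖f (x - ν)‖)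
    calc S ^ 2 * d ≤ (orb.card * ∑ ν ∈ orb, (D.acoef c τ wmin x ν * ‖f (x - ν)‖) ^ 2) * d :=
          mul_le_mul_of_nonneg_right this hd.1.le
      _ = orb.card * ∑ ν ∈ orb, (D.acoef c τ wmin x ν * ‖f (x - ν)‖) ^ 2 * d := by
          rw [mul_assoc, Finset.sum_mul]
      _ ≤ _ := by
          apply mul_le_mul_of_nonneg_left _ (by positivity)
          refine Finset.sum_le_sum fun ν _ => ?_
          have g1 := acoef_bd hp hc hw hτ hb x ν
          have g2 := acoef_delta_le hp hc hw hτ hb x ν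
          have g3 : D.acoef c τ wmin x ν ^ 2 * d ≤ deltaW D c τ wmin (x - ν) := by
            refine le_trans ?_ g2
            apply mul_le_mul_of_nonneg_right _ hd.1.le
            nlinarith
          calc (D.acoef c τ wmin x ν * ‖f (x - ν)‖) ^ 2 * d
              = ‖f (x - ν)‖ ^ 2 * (D.acoef c τ wmin x ν ^ 2 * d) := by ring
            _ ≤ _ := mul_le_mul_of_nonneg_left g3 (by positivity)
  calc ‖Lop D c τ wmin orb f x‖ ^ 2 * d ≤ 2 * (S ^ 2 + (B * ‖f x‖) ^ 2) * d :=
        mul_le_mul_of_nonneg_right h2 hd.1.le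
    _ = 2 * (S ^ 2 * d + B ^ 2 * (‖f x‖ ^ 2 * d)) := by ring
    _ ≤ _ := by linarith

lemma Lop_l2 (hp : IsP D c p) (hc : 0 < c) (hw : D.IsWmin c wmin) (hτ : TInv D c τ)
    (hb : TBd D τ) {orb : Finset V} (horb : ∀ ν ∈ orb, ν ∈ D.weightLattice) {B : ℝ}
    (hB : ∀ x, |diagC D c τ wmin orb x| ≤ B) (f : V → ℂ) (hf : MemL2 D c τ wmin f) :
    MemL2 D c τ wmin (Lop D c τ wmin orb f) ∧
      normSqDelta D c τ wmin (Lop D c τ wmin orb f) ≤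
        (2 * (orb.card * orb.card + B ^ 2)) * normSqDelta D c τ wmin f := by
  have hs : ∀ ν ∈ orb, HasSum (fun q : D.weightLattice =>
      ‖f (q.1 - ν)‖ ^ 2 * deltaW D c τ wmin (q.1 - ν)) (normSqDelta D c τ wmin f) := by
    intro ν hν
    exact (shift D ν (horb ν hν)).hasSum_iff.mpr (Summable.hasSum hf)
  have hsum := ((hasSum_sum hs).mul_left (orb.card : ℝ)).add
    ((Summable.hasSum hf).mul_left (B ^ 2))
  have hsum2 := hsum.mul_left 2
  have hpt := fun q : D.weightLattice => Lop_pt hp hc hw hτ hb hB f q.1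
  have hmem : MemL2 D c τ wmin (Lop D c τ wmin orb f) :=
    Summable.of_nonneg_of_le
      (fun q => mul_nonneg (sq_nonneg _) (delta_bd hp hc hw hb q.1).1.le) hpt hsum2.summable
  refine ⟨hmem, ?_⟩
  refine (hasSum_le hpt (Summable.hasSum hmem) hsum2).trans (le_of_eq ?_)
  change 2 * (_ * _ + B ^ 2 * normSqDelta D c τ wmin f) = _
  simp only [Finset.sum_const, nsmul_eq_mul]
  ring

lemma hop_summable (hp : IsP D c p) (hc : 0 < c) (hw : D.IsWmin c wmin) (hτ : TInv D c τ)
    (hb : TBd D τ) {ν : V} (hν : ν ∈ D.weightLattice) {f g : V → ℂ}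
    (hf : MemL2 D c τ wmin f) (hg : MemL2 D c τ wmin g) :
    Summable fun q : D.weightLattice => ((D.acoef c τ wmin q.1 ν : ℝ) : ℂ) * f (q.1 - ν) *
      (starRingEnd ℂ) (g q.1) * ((deltaW D c τ wmin q.1 : ℝ) : ℂ) := by
  have h1 : Summable (fun q : D.weightLattice =>
      ‖f (q.1 - ν)‖ ^ 2 * deltaW D c τ wmin (q.1 - ν)) :=
    (shift D ν hν).summable_iff.mpr hf
  refine Summable.of_norm_bounded (h1.add hg) fun q => ?_
  have g1 := acoef_bd hp hc hw hτ hb q.1 ν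
  have g2 := acoef_delta_le hp hc hw hτ hb q.1 ν
  have g3 := delta_bd hp hc hw hb q.1
  rw [norm_mul, norm_mul, norm_mul, Complex.norm_real, Complex.norm_real, RCLike.norm_conj,
    Real.norm_of_nonneg g1.1.le, Real.norm_of_nonneg g3.1.le]
  set a := D.acoef c τ wmin q.1 ν
  set d := deltaW D c τ wmin q.1
  set x := ‖f (q.1 - ν)‖
  set y := ‖g q.1‖
  have e1 : a * x * y * d ≤ (x ^ 2 + y ^ 2) * (a * d) := by
    have : 0 ≤ a * d := mul_nonneg g1.1.le g3.1.le
    nlinarith [sq_nonneg (x - y), sq_nonneg x, sq_nonneg y,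
      mul_nonneg this (add_nonneg (sq_nonneg (x - y)) (add_nonneg (sq_nonneg x) (sq_nonneg y)))]
  have e2 : x ^ 2 * (a * d) ≤ x ^ 2 * deltaW D c τ wmin (q.1 - ν) :=
    mul_le_mul_of_nonneg_left g2 (sq_nonneg _)
  have e3 : y ^ 2 * (a * d) ≤ y ^ 2 * d :=
    mul_le_mul_of_nonneg_left (by nlinarith [g1.2, g3.1]) (sq_nonneg _)
  linarith

lemma diag_summable (hp : IsP D c p) (hc : 0 < c) (hw : D.IsWmin c wmin)
    (hb : TBd D τ) {β : V → ℝ} {B : ℝ} (hB : ∀ x, |β x| ≤ B) {f g : V → ℂ}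
    (hf : MemL2 D c τ wmin f) (hg : MemL2 D c τ wmin g) :
    Summable fun q : D.weightLattice => ((β q.1 : ℝ) : ℂ) * f q.1 *
      (starRingEnd ℂ) (g q.1) * ((deltaW D c τ wmin q.1 : ℝ) : ℂ) := by
  refine Summable.of_norm_bounded ((Summable.add hf hg).mul_left B) fun q => ?_
  have g3 := delta_bd hp hc hw hb q.1
  rw [norm_mul, norm_mul, norm_mul, Complex.norm_real, Complex.norm_real, RCLike.norm_conj,
    Real.norm_of_nonneg g3.1.le, Real.norm_eq_abs]
  set d := deltaW D c τ wmin q.1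
  have hB0 : 0 ≤ B := (abs_nonneg _).trans (hB q.1)
  have e : ‖f q.1‖ * ‖g q.1‖ ≤ ‖f q.1‖ ^ 2 + ‖g q.1‖ ^ 2 := by
    nlinarith [sq_nonneg (‖f q.1‖ - ‖g q.1‖), sq_nonneg (‖f q.1‖), sq_nonneg (‖g q.1‖)]
  calc |β q.1| * ‖f q.1‖ * ‖g q.1‖ * d = |β q.1| * ((‖f q.1‖ * ‖g q.1‖) * d) := by ring
    _ ≤ B * ((‖f q.1‖ ^ 2 + ‖g q.1‖ ^ 2) * d) := by
      apply mul_le_mul (hB _) _ (mul_nonneg (by positivity) g3.1.le) hB0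
      exact mul_le_mul_of_nonneg_right e g3.1.le
    _ = _ := by ring

lemma inner_Lop (hp : IsP D c p) (hc : 0 < c) (hw : D.IsWmin c wmin) (hτ : TInv D c τ)
    (hb : TBd D τ) {orb : Finset V} (horb : ∀ ν ∈ orb, ν ∈ D.weightLattice) {B : ℝ}
    (hB : ∀ x, |diagC D c τ wmin orb x| ≤ B) {f g : V → ℂ} (hf : MemL2 D c τ wmin f)
    (hg : MemL2 D c τ wmin g) :
    innerDelta D c τ wmin (Lop D c τ wmin orb f) g =
      (∑ ν ∈ orb, ∑' q : D.weightLattice, ((D.acoef c τ wmin q.1 ν : ℝ) : ℂ) * f (q.1 - ν) *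
      (starRingEnd ℂ) (g q.1) * ((deltaW D c τ wmin q.1 : ℝ) : ℂ)) +
      ∑' q : D.weightLattice, ((diagC D c τ wmin orb q.1 : ℝ) : ℂ) * f q.1 *
      (starRingEnd ℂ) (g q.1) * ((deltaW D c τ wmin q.1 : ℝ) : ℂ) := by
  have h1 := hasSum_sum fun ν hν => (hop_summable hp hc hw hτ hb (horb ν hν) hf hg).hasSum
  have h2 := (diag_summable hp hc hw hb hB hf hg).hasSum
  unfold innerDelta
  refine Eq.trans ?_ (h1.add h2).tsum_eq
  refine tsum_congr fun q => ?_
  rw [Lop_eq, add_mul, add_mul, Finset.sum_mul, Finset.sum_mul]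

lemma inner_symm (f g : V → ℂ) :
    innerDelta D c τ wmin f g = (starRingEnd ℂ) (innerDelta D c τ wmin g f) := by
  unfold innerDelta
  rw [Complex.conj_tsum]
  refine tsum_congr fun q => ?_
  simp only [map_mul, Complex.conj_conj, Complex.conj_ofReal]
  ring

lemma adjoint (hp : IsP D c p) (hc : 0 < c) (hw : D.IsWmin c wmin) (hτ : TInv D c τ)
    (hb : TBd D τ) {orb orbS : Finset V} (horb : ∀ ν ∈ orb, ν ∈ D.weightLattice)
    (hneg : ∀ ν, ν ∈ orbS ↔ -ν ∈ orb)
    (hdiag : ∀ x, diagC D c τ wmin orbS x = diagC D c τ wmin orb x) {B : ℝ}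
    (hB : ∀ x, |diagC D c τ wmin orb x| ≤ B) {f g : V → ℂ} (hf : MemL2 D c τ wmin f)
    (hg : MemL2 D c τ wmin g) :
    innerDelta D c τ wmin (Lop D c τ wmin orb f) g =
      innerDelta D c τ wmin f (Lop D c τ wmin orbS g) := by
  have h0 : (0:V) ∈ D.weightLattice := fun α _ => ⟨0, by simp⟩
  have horbS : ∀ ν ∈ orbS, ν ∈ D.weightLattice := by
    intro ν hν
    simpa using wl_sub h0 (horb _ ((hneg ν).mp hν))
  rw [inner_symm f, inner_Lop hp hc hw hτ hb horb hB hf hg,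
    inner_Lop hp hc hw hτ hb horbS (B := B) (fun x => by rw [hdiag]; exact hB x) hg hf, map_add]
  congr 1
  · rw [map_sum]
    refine Finset.sum_bij' (fun ν _ => -ν) (fun ν _ => -ν) ?_ ?_ ?_ ?_ ?_
    · intro ν hν; rw [hneg, neg_neg]; exact hν
    · intro ν hν; rw [← hneg]; exact hν
    · intros; simp
    · intros; simp
    · intro ν hν
      rw [Complex.conj_tsum]
      rw [← (shift D ν (horb ν hν)).tsum_eq (fun q : D.weightLattice => (starRingEnd ℂ)
        (((D.acoef c τ wmin q.1 (-ν) : ℝ) : ℂ) * g (q.1 - -ν) *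
        (starRingEnd ℂ) (f q.1) * ((deltaW D c τ wmin q.1 : ℝ) : ℂ)))]
      refine tsum_congr fun q => ?_
      change _ = (starRingEnd ℂ)
        (((D.acoef c τ wmin (q.1 - ν) (-ν) : ℝ) : ℂ) * g (q.1 - ν - -ν) *
        (starRingEnd ℂ) (f (q.1 - ν)) * ((deltaW D c τ wmin (q.1 - ν) : ℝ) : ℂ))
      simp only [map_mul, Complex.conj_conj, Complex.conj_ofReal, sub_neg_eq_add, sub_add_cancel]
      have := congrArg (fun t : ℝ => (t : ℂ)) (acoef_symm hp hc hw hτ hb q.1 ν)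
      simp only [Complex.ofReal_mul] at this
      linear_combination (f (q.1 - ν) * (starRingEnd ℂ) (g q.1)) * this
  · rw [Complex.conj_tsum]
    refine tsum_congr fun q => ?_
    simp only [map_mul, Complex.conj_conj, Complex.conj_ofReal, hdiag]
    ring

end
end S17

open RootSystemData in
/-- for real multiplicity parameters with `0 < τ_a² < 1` and `ω`
(quasi-)minuscule: (a) `a_{λ,ν} δ_λ = a_{λ-ν,-ν} δ_{λ-ν}` for all `λ ∈ P`, `ν ∈ W₀ω`;
(b) the Laplacian `L_ω` is bounded on `ℓ²(P,δ)` and `⟨L_ω f, g⟩_δ = ⟨f, L_{ω∗} g⟩_δ`,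
where `ω∗ = -v₀ω` with `v₀` the longest element of `W₀`. -/
theorem statement17 {V : Type*} [NormedAddCommGroup V] [InnerProductSpace ℝ V]
    (D : RootSystemData V) (cz : ℤ) (hc : 1 < cz)
    (τ : V × ℤ → ℝ) (hτsq : ∀ a : V × ℤ, D.IsAffRoot a → 0 < τ a ^ 2 ∧ τ a ^ 2 < 1)
    (hτinv : ∀ w ∈ D.Wext (cz : ℝ), ∀ a b : V × ℤ, D.IsAffRoot a → D.IsAffRoot b →
      mapsRoot (cz : ℝ) w a b → τ a = τ b)
    (wmin : V → Equiv.Perm V) (hwmin : D.IsWmin (cz : ℝ) wmin)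
    (ω : V) (hω : D.IsMinuscule ω ∨ D.IsQuasiMinuscule ω)
    (v0 : Equiv.Perm V) (hv0 : v0 ∈ D.W0 ∧ ∀ w ∈ D.W0, D.len (cz : ℝ) w ≤ D.len (cz : ℝ) v0)
    (orb orbStar : Finset V)
    (horb : ∀ ν : V, ν ∈ orb ↔ ∃ w ∈ D.W0, w ω = ν)
    (horbStar : ∀ ν : V, ν ∈ orbStar ↔ ∃ w ∈ D.W0, w (-(v0 ω)) = ν) :
    -- (a)
    (∀ lam ∈ D.weightLattice, ∀ ν : V, (∃ w ∈ D.W0, w ω = ν) →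
      D.acoef (cz : ℝ) τ wmin lam ν * deltaW D (cz : ℝ) τ wmin lam
        = D.acoef (cz : ℝ) τ wmin (lam - ν) (-ν) * deltaW D (cz : ℝ) τ wmin (lam - ν)) ∧
    -- (b)
    ((∀ f : V → ℂ, MemL2 D (cz : ℝ) τ wmin f →
        MemL2 D (cz : ℝ) τ wmin (Lop D (cz : ℝ) τ wmin orb f)) ∧
      (∃ C : ℝ, ∀ f : V → ℂ, MemL2 D (cz : ℝ) τ wmin f →
        normSqDelta D (cz : ℝ) τ wmin (Lop D (cz : ℝ) τ wmin orb f)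
          ≤ C * normSqDelta D (cz : ℝ) τ wmin f) ∧
      (∀ f g : V → ℂ, MemL2 D (cz : ℝ) τ wmin f → MemL2 D (cz : ℝ) τ wmin g →
        innerDelta D (cz : ℝ) τ wmin (Lop D (cz : ℝ) τ wmin orb f) g
          = innerDelta D (cz : ℝ) τ wmin f (Lop D (cz : ℝ) τ wmin orbStar g))) := by
  have hc0 : (0:ℝ) < (cz : ℝ) := by exact_mod_cast (by omega : 0 < cz)
  obtain ⟨p, hp⟩ := S17.exists_isP D (cz : ℝ) hc0
  have hωP : ω ∈ D.weightLattice := by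
    rcases hω with h | h
    · exact h.1
    · rw [h]
      intro α hα
      exact D.crystallographic α hα _ (D.pos_subset D.hshort_mem)
  have horbP : ∀ ν ∈ orb, ν ∈ D.weightLattice := by
    intro ν hν
    obtain ⟨w, hw, rfl⟩ := (horb ν).mp hν
    exact S17.wl_W0 hωP hw
  have hW0neg : ∀ w ∈ D.W0, ∀ x, w (-x) = - w x := by
    intro w hw x
    obtain ⟨L, hL, _⟩ := S17.W0_lin hw
    rw [hL, hL, map_neg]
  have hneg : ∀ ν, ν ∈ orbStar ↔ -ν ∈ orb := by
    intro ν
    rw [horbStar, horb]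
    constructor
    · rintro ⟨w, hw, rfl⟩
      exact ⟨w * v0, mul_mem hw hv0.1, by rw [hW0neg w hw, neg_neg]; rfl⟩
    · rintro ⟨w, hw, h⟩
      refine ⟨w * v0⁻¹, mul_mem hw (inv_mem hv0.1), ?_⟩
      rw [hW0neg _ (mul_mem hw (inv_mem hv0.1))]
      simp [h]
  have hdiag : ∀ x, S17.diagC D cz τ wmin orbStar x = S17.diagC D cz τ wmin orb x := by
    intro x
    rcases hω with h | h
    · have hm := S17.mini_of_minuscule h
      have h1 : ∀ ν ∈ orb, S17.Mini D ν := by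
        intro ν hν
        obtain ⟨w, hw, rfl⟩ := (horb ν).mp hν
        exact S17.mini_W0 hm hw
      have h2 : ∀ ν ∈ orbStar, S17.Mini D ν := by
        intro ν hν
        simpa using S17.mini_neg (h1 _ ((hneg ν).mp hν))
      unfold S17.diagC
      rw [Finset.sum_eq_zero fun ν hν => S17.bcoef_zero hwmin (h1 ν hν) x,
        Finset.sum_eq_zero fun ν hν => S17.bcoef_zero hwmin (h2 ν hν) x]
    · have hR : ω ∈ D.R0 := by rw [h]; exact D.pos_subset D.hshort_mem
      have hs : ∀ ν ∈ orb, -ν ∈ orb := by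
        intro ν hν
        obtain ⟨w, hw, rfl⟩ := (horb ν).mp hν
        refine (horb _).mpr ⟨w * _, mul_mem hw (S17.refl_mem_W0 hR), ?_⟩
        change w (sAff 1 (ω, 0) ω) = _
        rw [← hW0neg w hw]
        congr 1
        simp only [sAff, aval, S17.inner_coroot_self (D.ne_zero _ hR)]
        simp [two_smul]
      have : orbStar = orb := by
        ext ν
        rw [hneg]
        exact ⟨fun h => by simpa using hs _ h, hs ν⟩
      rw [this]
  obtain ⟨B, _, hB⟩ := S17.diagC_bd hp hc0 hwmin hτsq horb
  refine ⟨fun lam _ ν _ => S17.acoef_symm hp hc0 hwmin hτinv hτsq lam ν, ?_, ?_, ?_⟩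
  · intro f hf
    exact (S17.Lop_l2 hp hc0 hwmin hτinv hτsq horbP hB f hf).1
  · exact ⟨_, fun f hf => (S17.Lop_l2 hp hc0 hwmin hτinv hτsq horbP hB f hf).2⟩
  · intro f g hf hg
    exact S17.adjoint hp hc0 hwmin hτinv hτsq horbP hneg hdiag hB hf hg
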